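/- Let m ≥ 1 and let F = FreeGroup (Fin m) with free basis x_i = FreeGroup.of i. Every m-tuple τ ∈ F^m that generates F (i.e. Subgroup.closure (Set.range τ) = ⊤) is Nielsen-equivalent in F to the basis tuple (x_1,...,x_m). -/

import Mathlib

/-- An elementary Nielsen move on an `m`-tuple of elements of a group `G`:
replace some `gᵢ` by `gᵢ⁻¹`, or interchange `gᵢ` and `gⱼ` for some `i ≠ j`,
or replace `gᵢ` by `gᵢ * gⱼ` for some `i ≠ j`. -/
def NielsenMove {G : Type*} [Group G] {m : ℕ} (τ τ' : Fin m → G) : Prop :=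
  (∃ i, τ' = Function.update τ i (τ i)⁻¹) ∨
  (∃ i j, i ≠ j ∧ τ' = τ ∘ Equiv.swap i j) ∨
  (∃ i j, i ≠ j ∧ τ' = Function.update τ i (τ i * τ j))

/-- Two `m`-tuples are Nielsen-equivalent in `G` if one is obtained from the
other by a finite chain of elementary Nielsen moves. -/
def NielsenEquiv {G : Type*} [Group G] {m : ℕ} (τ τ' : Fin m → G) : Prop :=
  Relation.ReflTransGen NielsenMove τ τ'

namespace FreeGroup

variable {α : Type*} {S : Set (FreeGroup α)}

section WordRank

variable [Fintype α]

/-- A numbering of words which is injective on words of any fixed length. -/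
noncomputable def wordRank (L : List (α × Bool)) : ℕ :=
  Nat.ofDigits (Fintype.card (α × Bool) + 2) (L.map fun x => (Fintype.equivFin (α × Bool) x : ℕ))

theorem wordRank_injective_of_length_eq {p q : List (α × Bool)} (hl : p.length = q.length)
    (h : wordRank p = wordRank q) : p = q := by
  have hlt (L : List (α × Bool)) :
      ∀ l ∈ L.map fun x => (Fintype.equivFin (α × Bool) x : ℕ),
        l < Fintype.card (α × Bool) + 2 := by
    intro l hl
    obtain ⟨x, -, rfl⟩ := List.mem_map.1 hl
    have := (Fintype.equivFin (α × Bool) x).2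
    omega
  have := Nat.ofDigits_inj_of_len_eq (by omega) (by simpa using hl) (hlt p) (hlt q) h
  exact List.map_injective_iff.2
    (Fin.val_injective.comp (Fintype.equivFin (α × Bool)).injective) this

theorem wordRank_append_lt {p q : List (α × Bool)} (hl : p.length = q.length)
    (h : wordRank p < wordRank q) (c : List (α × Bool)) :
    wordRank (p ++ c) < wordRank (q ++ c) := by
  unfold wordRank at *
  simpa [Nat.ofDigits_append, hl] using h

end WordRank

/-- `ReducedProd S P u` says that `P` is a product of elements of `S`, no two consecutive ones being
mutually inverse, with last factor `u`. -/
inductive ReducedProd (S : Set (FreeGroup α)) : FreeGroup α → FreeGroup α → Prop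
  | single {u} : u ∈ S → ReducedProd S u u
  | mul {P u v} : ReducedProd S P u → v ∈ S → u * v ≠ 1 → ReducedProd S (P * v) v

theorem ReducedProd.mem {P u : FreeGroup α} (h : ReducedProd S P u) : u ∈ S := by
  cases h <;> assumption

variable [DecidableEq α]

/-- The reduced words of `u` and `v` are `a ++ t⁻¹` and `t ++ s`, and `a ++ s` is the reduced word
of `u * v`. -/
def Cancels (u v : FreeGroup α) (a t s : List (α × Bool)) : Prop :=
  u.toWord = a ++ invRev t ∧ v.toWord = t ++ s ∧ (u * v).toWord = a ++ s

theorem toWord_mul_of_isReduced {u v : FreeGroup α} {a t s : List (α × Bool)}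
    (hu : u.toWord = a ++ invRev t) (hv : v.toWord = t ++ s) (h : IsReduced (a ++ s)) :
    (u * v).toWord = a ++ s := by
  have : u * v = mk (a ++ s) := by
    rw [← mk_toWord (x := u), ← mk_toWord (x := v), hu, hv]
    simp only [← mul_mk, ← inv_mk]
    group
  rw [this, toWord_mk, h.reduce_eq]

theorem exists_isReduced_append (y : List (α × Bool)) :
    ∀ x : List (α × Bool), IsReduced x → IsReduced y →
      ∃ a t s, x = a ++ invRev t ∧ y = t ++ s ∧ IsReduced (a ++ s) := by
  induction y with
  | nil => exact fun x hx _ => ⟨x, [], [], by simp, by simp, by simpa using hx⟩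
  | cons l y ih =>
    intro x hx hy
    induction x using List.reverseRecOn with
    | nil => exact ⟨[], [], l :: y, by simp, by simp, by simpa using hy⟩
    | append_singleton x k _ =>
      by_cases hkl : k.1 = l.1 → k.2 = l.2
      · refine ⟨x ++ [k], [], l :: y, by simp, by simp, ?_⟩
        have h : IsReduced ([k] ++ l :: y) := by
          rw [List.singleton_append, isReduced_cons_cons]
          exact ⟨hkl, hy⟩
        exact hx.append_overlap h (by simp)
      · obtain ⟨a, t, s, rfl, rfl, h⟩ := ih x (hx.infix (List.prefix_append _ _).isInfix)
          (hy.infix (List.suffix_cons _ _).isInfix)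
        refine ⟨a, l :: t, s, ?_, by simp, h⟩
        obtain ⟨k₁, k₂⟩ := k
        obtain ⟨l₁, l₂⟩ := l
        rw [invRev_cons]
        simp only [invRev, List.append_assoc]
        simp at hkl ⊢
        obtain ⟨rfl, h⟩ := hkl
        cases k₂ <;> cases l₂ <;> simp_all

theorem exists_cancels (u v : FreeGroup α) : ∃ a t s, Cancels u v a t s := by
  obtain ⟨a, t, s, hu, hv, h⟩ := exists_isReduced_append v.toWord u.toWord isReduced_toWord
    isReduced_toWord
  exact ⟨a, t, s, hu, hv, toWord_mul_of_isReduced hu hv h⟩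

theorem Cancels.inv {u v : FreeGroup α} {a t s : List (α × Bool)} (h : Cancels u v a t s) :
    Cancels v⁻¹ u⁻¹ (invRev s) t (invRev a) := by
  obtain ⟨h₁, h₂, h₃⟩ := h
  refine ⟨?_, ?_, ?_⟩
  · rw [toWord_inv, h₂, invRev_append]
  · rw [toWord_inv, h₁, invRev_append, invRev_invRev]
  · rw [← mul_inv_rev, toWord_inv, h₃, invRev_append]

theorem norm_le_norm_mul_self (u : FreeGroup α) : u.norm ≤ (u * u).norm := by
  have h := reduceCyclically.reduce_flatten_replicate_succ (isReduced_toWord (x := u)) 1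
  have h' := reduceCyclically.conj_conjugator_reduceCyclically u.toWord
  have : (u * u).toWord = reduce (List.replicate (1 + 1) u.toWord).flatten := by
    rw [← toWord_pow, pow_two]
  unfold norm
  rw [this, h]
  nth_rw 1 [← h']
  simp

/-- The cancellation conditions characterizing Nielsen-reduced sets, phrased for a set that is
thought of as closed under inversion. -/
structure IsNielsenReduced (S : Set (FreeGroup α)) : Prop where
  one_notMem : 1 ∉ S
  length_le {u v : FreeGroup α} {a t s : List (α × Bool)} : u ∈ S → v ∈ S → u * v ≠ 1 →
    Cancels u v a t s → t.length ≤ a.length ∧ t.length ≤ s.length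
  length_add_lt {u v w : FreeGroup α} {a t s b q c : List (α × Bool)} : u ∈ S → v ∈ S → w ∈ S →
    u * v ≠ 1 → v * w ≠ 1 → Cancels u v a t s → Cancels v w b q c →
    t.length + q.length < v.norm

theorem eq_one_or_reducedProd_mul {P v : FreeGroup α} (h : P = 1 ∨ ∃ u, ReducedProd S P u)
    (hv : v ∈ S) : P * v = 1 ∨ ∃ u, ReducedProd S (P * v) u := by
  rcases h with rfl | ⟨u, h⟩
  · exact .inr ⟨v, by simpa using ReducedProd.single hv⟩
  by_cases huv : u * v = 1
  · cases h with
    | single => exact .inl huv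
    | @mul P u' _ h =>
      rw [mul_assoc, huv, mul_one]
      exact .inr ⟨u', h⟩
  · exact .inr ⟨v, h.mul hv huv⟩

theorem eq_one_or_reducedProd (hS : ∀ u ∈ S, u⁻¹ ∈ S) {P : FreeGroup α}
    (hP : P ∈ Subgroup.closure S) : P = 1 ∨ ∃ u, ReducedProd S P u := by
  induction hP using Subgroup.closure_induction_right with
  | one => exact .inl rfl
  | mul_right x _ y hy ih => exact eq_one_or_reducedProd_mul ih hy
  | mul_inv_cancel x _ y hy ih => exact eq_one_or_reducedProd_mul ih (hS y hy)

theorem IsNielsenReduced.exists_toWord_eq (hS : IsNielsenReduced S) {P u : FreeGroup α}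
    (h : ReducedProd S P u) : ∃ a t s, P.toWord = a ++ s ∧ u.toWord = t ++ s ∧
      (a = [] ∧ t = [] ∨ a ≠ [] ∧ ∃ v ∈ S, v * u ≠ 1 ∧ ∃ b, Cancels v u b t s) := by
  induction h with
  | @single u hu => exact ⟨[], [], u.toWord, by simp⟩
  | @mul P u v h hv huv ih =>
    obtain ⟨a, t, s, hP, hu, hd⟩ := ih
    obtain ⟨b, q, c, hc⟩ := exists_cancels u v
    have hlt : q.length < s.length := by
      rcases hd with ⟨rfl, rfl⟩ | ⟨-, w, hw, hwu, d, hd⟩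
      · have h₁ := (hS.length_le h.mem hv huv hc).1
        have h₂ : u.toWord ≠ [] := fun h' =>
          hS.one_notMem (by simpa [toWord_eq_nil_iff.1 h'] using h.mem)
        have h₃ := congrArg List.length (hu.symm.trans hc.1)
        have h₄ := List.length_pos_of_ne_nil h₂
        rw [hu] at h₄
        simp at h₃ h₄
        omega
      · have h₁ := hS.length_add_lt hw h.mem hv hwu huv hd hc
        rw [norm, hu] at h₁
        simpa using h₁
    obtain ⟨s', rfl, hs⟩ : ∃ s', b = t ++ s' ∧ s = s' ++ invRev q := by
      rcases List.append_eq_append_iff.1 (hu.symm.trans hc.1) with h' | ⟨s', -, h'⟩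
      · exact h'
      · have := congrArg List.length h'
        simp at this
        omega
    have hs' : s' ≠ [] := by
      rintro rfl
      simp [hs] at hlt
    have hred : IsReduced (a ++ s' ++ c) := by
      refine IsReduced.append_overlap ?_ ?_ hs'
      · refine (isReduced_toWord (x := P)).infix (List.IsPrefix.isInfix ?_)
        rw [hP, hs, ← List.append_assoc]
        exact List.prefix_append _ _
      · refine (isReduced_toWord (x := u * v)).infix (List.IsSuffix.isInfix ?_)
        rw [hc.2.2, List.append_assoc]
        exact List.suffix_append _ _
    refine ⟨a ++ s', q, c, toWord_mul_of_isReduced ?_ hc.2.1 hred, hc.2.1,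
      .inr ⟨by simp [hs'], u, h.mem, huv, _, hc⟩⟩
    rw [hP, hs, List.append_assoc]

/-- A Nielsen-reduced set contains all elements of norm one of the subgroup it generates. -/
theorem IsNielsenReduced.mem_of_norm_eq_one (hS : IsNielsenReduced S) (hinv : ∀ u ∈ S, u⁻¹ ∈ S)
    {x : FreeGroup α} (hx : x ∈ Subgroup.closure S) (h1 : x.norm = 1) : x ∈ S := by
  rcases eq_one_or_reducedProd hinv hx with rfl | ⟨u, h⟩
  · simp at h1
  obtain ⟨a, t, s, hP, hu, ⟨rfl, rfl⟩ | ⟨ha, v, hv, hvu, b, hc⟩⟩ := hS.exists_toWord_eq h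
  · have : x = u := toWord_injective (hP.trans hu.symm)
    exact this ▸ h.mem
  · exfalso
    have h₁ := (hS.length_le hv h.mem hvu hc).2
    have h₂ := List.length_pos_of_ne_nil ha
    rw [norm, hP, List.length_append] at h1
    have h₃ : u.toWord = [] := by
      rw [← List.length_eq_zero_iff, hu, List.length_append]
      omega
    exact hS.one_notMem (toWord_eq_nil_iff.1 h₃ ▸ h.mem)

section Weight

variable [Fintype α]

/-- The initial half of the reduced word of `g`, including the middle letter. -/
def initialHalf (g : FreeGroup α) : List (α × Bool) :=
  g.toWord.take ((g.norm + 1) / 2)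

/-- The weight used to decide whether a Nielsen move makes progress: first the norm, then the ranks
of the initial halves of the element and its inverse. -/
noncomputable def nielsenWeight (g : FreeGroup α) : ℕ ×ₗ ℕ :=
  toLex (g.norm, wordRank g.initialHalf + wordRank g⁻¹.initialHalf)

theorem nielsenWeight_inv (g : FreeGroup α) : nielsenWeight g⁻¹ = nielsenWeight g := by
  simp [nielsenWeight, add_comm]

theorem norm_le_of_nielsenWeight_le {g h : FreeGroup α} (H : nielsenWeight g ≤ nielsenWeight h) :
    g.norm ≤ h.norm := by
  rcases Prod.Lex.toLex_le_toLex.1 H with H | H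
  · exact H.le
  · exact H.1.le

theorem nielsenWeight_lt_of_wordRank_lt {g h : FreeGroup α} {p q c : List (α × Bool)}
    (hl : p.length = q.length) (hpq : wordRank p < wordRank q) (hqc : q.length ≤ c.length)
    (hg : g.toWord = p ++ c) (hh : h.toWord = q ++ c) : nielsenWeight g < nielsenWeight h := by
  have hn : g.norm = h.norm := by simp [norm, hg, hh, hl]
  have hn' : h.norm = q.length + c.length := by simp [norm, hh]
  have hinv : g⁻¹.initialHalf = h⁻¹.initialHalf := by
    simp only [initialHalf, norm_inv_eq, hn, toWord_inv, hg, hh, invRev_append]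
    rw [List.take_append_of_le_length, List.take_append_of_le_length] <;>
      · rw [invRev_length]
        omega
  refine Prod.Lex.toLex_lt_toLex.2 (.inr ⟨hn, ?_⟩)
  dsimp only
  rw [hinv, add_lt_add_iff_right]
  simp only [initialHalf, hn, hg, hh, List.take_append, hl]
  rw [List.take_of_length_le (l := p) (by omega), List.take_of_length_le (l := q) (by omega)]
  exact wordRank_append_lt hl hpq _

end Weight

end FreeGroup

section Nielsen

variable {G : Type*} [Group G] {m : ℕ}

theorem NielsenEquiv.trans {τ τ' τ'' : Fin m → G} (h : NielsenEquiv τ τ')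
    (h' : NielsenEquiv τ' τ'') : NielsenEquiv τ τ'' :=
  Relation.ReflTransGen.trans h h'

theorem nielsenEquiv_update_inv (τ : Fin m → G) (i : Fin m) :
    NielsenEquiv τ (Function.update τ i (τ i)⁻¹) :=
  .single (.inl ⟨i, rfl⟩)

theorem nielsenEquiv_update_mul (τ : Fin m → G) {i j : Fin m} (hij : i ≠ j) :
    NielsenEquiv τ (Function.update τ i (τ i * τ j)) :=
  .single (.inr (.inr ⟨i, j, hij, rfl⟩))

theorem nielsenEquiv_update_mul_inv (τ : Fin m → G) {i j : Fin m} (hij : i ≠ j) :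
    NielsenEquiv τ (Function.update τ i (τ i * (τ j)⁻¹)) := by
  convert ((nielsenEquiv_update_inv τ j).trans (nielsenEquiv_update_mul _ hij)).trans
    (nielsenEquiv_update_inv _ j) using 1
  ext k
  by_cases hj : k = j
  · subst hj
    simp [hij.symm]
  · by_cases hi : k = i
    · subst hi
      simp [hij]
    · simp [hi, hj]

theorem nielsenEquiv_update_mul_of_eq_or_eq_inv (τ : Fin m → G) {i j : Fin m} (hij : i ≠ j)
    {u v : G} (hu : u = τ i ∨ u = (τ i)⁻¹) (hv : v = τ j ∨ v = (τ j)⁻¹) :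
    NielsenEquiv τ (Function.update τ i (u * v)) := by
  have key (σ : Fin m → G) {w : G} (hw : w = σ j ∨ w = (σ j)⁻¹) :
      NielsenEquiv σ (Function.update σ i (σ i * w)) := by
    rcases hw with rfl | rfl
    · exact nielsenEquiv_update_mul σ hij
    · exact nielsenEquiv_update_mul_inv σ hij
  rcases hu with rfl | rfl
  · exact key τ hv
  · have h := (nielsenEquiv_update_inv τ i).trans
      (key _ (w := v) (by simpa [hij.symm] using hv))
    simpa using h

theorem nielsenEquiv_comp_perm (e : Equiv.Perm (Fin m)) :
    ∀ τ : Fin m → G, NielsenEquiv τ (τ ∘ e) := by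
  induction e using Equiv.Perm.swap_induction_on with
  | one => exact fun τ => .refl
  | swap_mul f i j hij ih =>
    exact fun τ => NielsenEquiv.trans (.single (.inr (.inl ⟨i, j, hij, rfl⟩))) (ih _)

theorem nielsenEquiv_ite_inv (τ : Fin m → G) (s : Finset (Fin m)) :
    NielsenEquiv τ (fun i => if i ∈ s then (τ i)⁻¹ else τ i) := by
  induction s using Finset.induction_on with
  | empty => exact .refl
  | insert a s ha ih =>
    convert ih.trans (nielsenEquiv_update_inv _ a) using 1
    ext k
    by_cases hk : k = a
    · subst hk
      simp [ha]
    · simp [hk]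

theorem nielsenEquiv_of_eq_or_eq_inv {τ τ' : Fin m → G} (h : ∀ i, τ' i = τ i ∨ τ' i = (τ i)⁻¹) :
    NielsenEquiv τ τ' := by
  classical
  convert nielsenEquiv_ite_inv τ (Finset.univ.filter fun i => τ' i ≠ τ i) using 1
  ext i
  by_cases h' : τ' i = τ i
  · simp [h']
  · simpa [h'] using (h i).resolve_left h'

theorem NielsenMove.mem_of_forall_mem {H : Subgroup G} {τ τ' : Fin m → G}
    (h : NielsenMove τ τ') (hH : ∀ i, τ' i ∈ H) (i : Fin m) : τ i ∈ H := by
  rcases h with ⟨j, rfl⟩ | ⟨j, k, -, rfl⟩ | ⟨j, k, hjk, rfl⟩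
  · by_cases hi : i = j
    · subst hi
      simpa using hH i
    · simpa [hi] using hH i
  · simpa using hH (Equiv.swap j k i)
  · by_cases hi : i = j
    · subst hi
      have hk : τ k ∈ H := by simpa [hjk.symm] using hH k
      have hi : τ i * τ k ∈ H := by simpa using hH i
      exact (H.mul_mem_cancel_right hk).1 hi
    · simpa [hi] using hH i

theorem NielsenEquiv.mem_of_forall_mem {H : Subgroup G} {τ τ' : Fin m → G}
    (h : NielsenEquiv τ τ') : (∀ i, τ' i ∈ H) → ∀ i, τ i ∈ H := by
  induction h with
  | refl => exact id
  | tail _ h ih => exact fun hH => ih (NielsenMove.mem_of_forall_mem h hH)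

theorem NielsenEquiv.closure_range_eq_top {τ τ' : Fin m → G} (h : NielsenEquiv τ τ')
    (hτ : Subgroup.closure (Set.range τ) = ⊤) : Subgroup.closure (Set.range τ') = ⊤ := by
  rw [eq_top_iff, ← hτ, Subgroup.closure_le]
  rintro _ ⟨i, rfl⟩
  exact h.mem_of_forall_mem (fun j => Subgroup.subset_closure (Set.mem_range_self j)) i

/-- The nontrivial entries of a tuple, together with their inverses. -/
def nontrivialEntries (τ : Fin m → G) : Set G :=
  {g | g ≠ 1 ∧ ∃ i, g = τ i ∨ g = (τ i)⁻¹}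

theorem inv_mem_nontrivialEntries (τ : Fin m → G) : ∀ u ∈ nontrivialEntries τ,
    u⁻¹ ∈ nontrivialEntries τ := by
  rintro u ⟨hu, i, h⟩
  refine ⟨by simpa using hu, i, ?_⟩
  rcases h with rfl | rfl <;> simp

theorem closure_nontrivialEntries_eq_top {τ : Fin m → G}
    (hτ : Subgroup.closure (Set.range τ) = ⊤) : Subgroup.closure (nontrivialEntries τ) = ⊤ := by
  rw [eq_top_iff, ← hτ, Subgroup.closure_le]
  rintro _ ⟨i, rfl⟩
  by_cases h : τ i = 1
  · rw [h]
    exact one_mem _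
  · exact Subgroup.subset_closure ⟨h, i, .inl rfl⟩

end Nielsen

open FreeGroup in
theorem exists_nielsenEquiv_isNielsenReduced {α : Type*} [DecidableEq α] [Fintype α] {m : ℕ}
    (τ : Fin m → FreeGroup α) :
    ∃ σ, NielsenEquiv τ σ ∧ IsNielsenReduced (nontrivialEntries σ) := by
  obtain ⟨σ, hσ, hmin⟩ : ∃ σ, NielsenEquiv τ σ ∧ ∀ σ', NielsenEquiv τ σ' →
      ¬ ∑ i, nielsenWeight (σ' i) < ∑ i, nielsenWeight (σ i) := by
    obtain ⟨σ, hσ, hmin⟩ := (InvImage.wf (fun σ : Fin m → FreeGroup α => ∑ i, nielsenWeight (σ i))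
      (wellFounded_lt (α := ℕ ×ₗ ℕ))).has_min {σ | NielsenEquiv τ σ} ⟨τ, .refl⟩
    exact ⟨σ, hσ, hmin⟩
  refine ⟨σ, hσ, ?_⟩
  have weight_le {i j : Fin m} (hij : i ≠ j) {u v : FreeGroup α} (hu : u = σ i ∨ u = (σ i)⁻¹)
      (hv : v = σ j ∨ v = (σ j)⁻¹) : nielsenWeight u ≤ nielsenWeight (u * v) := by
    by_contra! hlt
    refine hmin _ (hσ.trans (nielsenEquiv_update_mul_of_eq_or_eq_inv σ hij hu hv)) ?_
    have hui : nielsenWeight u = nielsenWeight (σ i) := by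
      rcases hu with rfl | rfl
      · rfl
      · exact nielsenWeight_inv _
    refine Finset.sum_lt_sum (fun k _ => ?_) ⟨i, Finset.mem_univ i, by simpa [← hui] using hlt⟩
    by_cases hk : k = i
    · subst hk
      simpa [← hui] using hlt.le
    · simp [hk]
  have eq_or_weight_le {u v : FreeGroup α} (hu : u ∈ nontrivialEntries σ)
      (hv : v ∈ nontrivialEntries σ) (huv : u * v ≠ 1) :
      u = v ∨ nielsenWeight u ≤ nielsenWeight (u * v) := by
    obtain ⟨-, i, hi⟩ := hu
    obtain ⟨-, j, hj⟩ := hv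
    by_cases hij : i = j
    · subst hij
      rcases hi with rfl | rfl <;> rcases hj with rfl | rfl <;> simp_all
    · exact .inr (weight_le hij hi hj)
  have norm_le {u v : FreeGroup α} (hu : u ∈ nontrivialEntries σ)
      (hv : v ∈ nontrivialEntries σ) (huv : u * v ≠ 1) : u.norm ≤ (u * v).norm := by
    rcases eq_or_weight_le hu hv huv with rfl | h
    · exact norm_le_norm_mul_self u
    · exact norm_le_of_nielsenWeight_le h
  have inv_mul_ne {u v : FreeGroup α} (huv : u * v ≠ 1) : v⁻¹ * u⁻¹ ≠ 1 := by
    rwa [← mul_inv_rev, inv_ne_one]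
  have le_left {u v : FreeGroup α} {a t s : List (α × Bool)} (hu : u ∈ nontrivialEntries σ)
      (hv : v ∈ nontrivialEntries σ) (huv : u * v ≠ 1) (h : Cancels u v a t s) :
      t.length ≤ s.length := by
    have := norm_le hu hv huv
    rw [FreeGroup.norm, FreeGroup.norm, h.1, h.2.2] at this
    simpa using this
  have le_right {u v : FreeGroup α} {a t s : List (α × Bool)} (hu : u ∈ nontrivialEntries σ)
      (hv : v ∈ nontrivialEntries σ) (huv : u * v ≠ 1) (h : Cancels u v a t s) :
      t.length ≤ a.length := by
    simpa using le_left (inv_mem_nontrivialEntries σ v hv) (inv_mem_nontrivialEntries σ u hu)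
      (inv_mul_ne huv) h.inv
  have not_rank_lt {v w : FreeGroup α} {p q c : List (α × Bool)} (hv : v ∈ nontrivialEntries σ)
      (hw : w ∈ nontrivialEntries σ) (hvw : v * w ≠ 1) (h : Cancels v w p q c)
      (hl : p.length = q.length) : ¬ wordRank p < wordRank q := by
    intro hlt
    have hlt' := nielsenWeight_lt_of_wordRank_lt hl hlt (le_left hv hw hvw h) h.2.2 h.2.1
    rcases eq_or_weight_le (inv_mem_nontrivialEntries σ w hw) (inv_mem_nontrivialEntries σ v hv)
      (inv_mul_ne hvw) with heq | hle
    · obtain rfl := inv_injective heq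
      have := (List.append_inj (h.1.symm.trans h.2.1) hl).1
      exact hlt.ne (congrArg _ this)
    · rw [← mul_inv_rev, nielsenWeight_inv, nielsenWeight_inv] at hle
      exact hle.not_gt hlt'
  refine ⟨fun h => h.1 rfl, fun hu hv huv h => ⟨le_right hu hv huv h, le_left hu hv huv h⟩, ?_⟩
  intro u v w a t s b q c hu hv hw huv hvw h h'
  by_contra! hle
  have h₁ := le_left hu hv huv h
  have h₂ := le_right hv hw hvw h'
  have h₃ : v.norm = t.length + s.length := by simp [FreeGroup.norm, h.2.1]
  have h₄ : v.norm = b.length + q.length := by simp [FreeGroup.norm, h'.1]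
  have htq : t.length = q.length := by omega
  obtain ⟨rfl, rfl⟩ := List.append_inj (h.2.1.symm.trans h'.1) (by omega)
  rcases lt_trichotomy (wordRank t) (wordRank q) with hlt | heq | hlt
  · exact not_rank_lt hv hw hvw h' htq hlt
  · obtain rfl := wordRank_injective_of_length_eq htq heq
    refine hv.1 ?_
    rw [← mk_toWord (x := v), h'.1, ← mul_mk, ← inv_mk, mul_inv_cancel]
  · refine not_rank_lt (inv_mem_nontrivialEntries σ v hv) (inv_mem_nontrivialEntries σ u hu)
      (inv_mul_ne huv) (c := invRev a) ?_ htq.symm hlt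
    simpa using h.inv

theorem FreeGroup.eq_of_of_eq_or_eq_inv {α : Type*} {i j : α}
    (h : of i = of j ∨ of i = (of j)⁻¹) : i = j := by
  classical
  rcases h with h | h
  · exact of_injective h
  · have := congrArg toWord h
    simp [toWord_inv, invRev] at this

/-- In a free group of finite rank `m`, every generating `m`-tuple is
Nielsen-equivalent to the free basis tuple. -/
theorem generating_tuple_nielsenEquiv_basis {m : ℕ} (hm : 1 ≤ m)
    (τ : Fin m → FreeGroup (Fin m))
    (hτ : Subgroup.closure (Set.range τ) = ⊤) :
    NielsenEquiv τ (fun i => FreeGroup.of i) := by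
  obtain ⟨σ, hσ, hred⟩ := exists_nielsenEquiv_isNielsenReduced τ
  have htop := closure_nontrivialEntries_eq_top (hσ.closure_range_eq_top hτ)
  have hmem (i : Fin m) : ∃ j, FreeGroup.of i = σ j ∨ FreeGroup.of i = (σ j)⁻¹ :=
    (hred.mem_of_norm_eq_one (inv_mem_nontrivialEntries σ) (htop ▸ Subgroup.mem_top _)
      (FreeGroup.norm_of i)).2
  choose f hf using hmem
  have hinj : Function.Injective f := by
    intro i j hij
    refine FreeGroup.eq_of_of_eq_or_eq_inv ?_
    have hi := hf i
    have hj := hf j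
    rw [hij] at hi
    rcases hi with hi | hi <;> rcases hj with hj | hj <;> simp [hi, hj]
  exact (hσ.trans (nielsenEquiv_comp_perm (Equiv.ofBijective f hinj.bijective_of_finite) σ)).trans
    (nielsenEquiv_of_eq_or_eq_inv hf)
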